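/- Let A be an irreducible hyperplane arrangement of rank at least 3 containing a generic hyperplane H_0 (i.e., every rank-2 flat contained in H_0 lies on exactly 2 hyperplanes of A). Then A is totally nonfree: for every multiplicity function m: A → Z_{>0}, the multiarrangement (A,m) is not free. -/

import Mathlib

open scoped Classical
open MvPolynomial

namespace ArrPaper

variable {K : Type*} [Field K] {ℓ : ℕ}

/-- The coordinate ring `S = K[x₁,…,x_ℓ]`. -/
noncomputable abbrev S (K : Type*) [Field K] (ℓ : ℕ) := MvPolynomial (Fin ℓ) K

/-- The linear form associated to a covector `c`. -/
noncomputable def linForm (c : Fin ℓ → K) : S K ℓ :=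
  ∑ i, MvPolynomial.C (c i) * MvPolynomial.X i

/-- The linear functional associated to a covector. -/
noncomputable def toFunc (c : Fin ℓ → K) : (Fin ℓ → K) →ₗ[K] K :=
  ∑ i, c i • LinearMap.proj i

/-- A (central) hyperplane arrangement, given by a finite set of nonzero,
pairwise non-proportional covectors (defining linear forms). -/
structure Arrangement (K : Type*) [Field K] (ℓ : ℕ) where
  hyps : Finset (Fin ℓ → K)
  ne_zero : ∀ c ∈ hyps, c ≠ 0
  nonparallel : ∀ c ∈ hyps, ∀ c' ∈ hyps, c ≠ c' → ∀ t : K, c' ≠ t • c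

/-- Derivations of the polynomial ring `S`. -/
abbrev Der (K : Type*) [Field K] (ℓ : ℕ) := Derivation K (S K ℓ) (S K ℓ)

/-- `θ` is a logarithmic derivation of the multiarrangement `(A, m)`, i.e.
`θ(α_H) ∈ α_H^{m(H)}·S` for all `H ∈ A`. -/
def IsLogDer (A : Arrangement K ℓ) (m : (Fin ℓ → K) → ℕ) (θ : Der K ℓ) : Prop :=
  ∀ c ∈ A.hyps, (linForm c) ^ (m c) ∣ θ (linForm c)

/-- `θ` is homogeneous of polynomial degree `d`: `θ(α)` is homogeneous of degree `d`
for every linear form `α`. -/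
def IsHomogOfDeg (θ : Der K ℓ) (d : ℕ) : Prop :=
  ∀ c : Fin ℓ → K, (θ (linForm c)).IsHomogeneous d

/-- `θ₁, …, θ_ℓ` form a basis of the `S`-module `D(A,m)`. -/
def IsDerBasis (A : Arrangement K ℓ) (m : (Fin ℓ → K) → ℕ) (θ : Fin ℓ → Der K ℓ) : Prop :=
  (∀ i, IsLogDer A m (θ i)) ∧
  ∀ η : Der K ℓ, IsLogDer A m η → ∃! f : Fin ℓ → S K ℓ, η = ∑ i, f i • θ i

/-- `(A,m)` is free with a homogeneous basis of degrees (exponents) `d`. -/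
def IsFreeWithExp (A : Arrangement K ℓ) (m : (Fin ℓ → K) → ℕ) (d : Fin ℓ → ℕ) : Prop :=
  ∃ θ : Fin ℓ → Der K ℓ, (∀ i, IsHomogOfDeg (θ i) (d i)) ∧ IsDerBasis A m θ

/-- `(A,m)` is a free multiarrangement. -/
def IsFree (A : Arrangement K ℓ) (m : (Fin ℓ → K) → ℕ) : Prop :=
  ∃ d : Fin ℓ → ℕ, IsFreeWithExp A m d

/-- `|m|`, the total multiplicity. -/
def msum (A : Arrangement K ℓ) (m : (Fin ℓ → K) → ℕ) : ℕ := ∑ c ∈ A.hyps, m c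

/-- The rank of an arrangement: the dimension of the span of its covectors. -/
noncomputable def rank (A : Arrangement K ℓ) : ℕ :=
  Module.finrank K (Submodule.span K (A.hyps : Set (Fin ℓ → K)))

/-- `A` is reducible: after a linear change of coordinates it is a product of two
arrangements in complementary (nonzero) subspaces.  In terms of covectors: the
covectors split between two complementary nonzero subspaces of the dual space. -/
def Reducible (A : Arrangement K ℓ) : Prop :=
  ∃ W₁ W₂ : Submodule K (Fin ℓ → K), W₁ ≠ ⊥ ∧ W₂ ≠ ⊥ ∧ W₁ ⊓ W₂ = ⊥ ∧ W₁ ⊔ W₂ = ⊤ ∧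
    ∀ c ∈ A.hyps, c ∈ W₁ ∨ c ∈ W₂

/-- The hyperplanes of the localization at a flat; the flat of codimension `r` is
encoded by the `r`-dimensional subspace `U` of the dual space spanned by the
covectors of the hyperplanes containing it. -/
noncomputable def locHyps (A : Arrangement K ℓ) (U : Submodule K (Fin ℓ → K)) :
    Finset (Fin ℓ → K) :=
  A.hyps.filter (· ∈ U)

/-- `U` encodes a flat of `A` of codimension `r` (an element of `L_r(A)`). -/
def IsFlatOfRank (A : Arrangement K ℓ) (U : Submodule K (Fin ℓ → K)) (r : ℕ) : Prop :=
  Module.finrank K U = r ∧ Submodule.span K (locHyps A U : Set (Fin ℓ → K)) = U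

/-- The localization `A_X` of `A` at the flat encoded by `U`. -/
noncomputable def localize (A : Arrangement K ℓ) (U : Submodule K (Fin ℓ → K)) :
    Arrangement K ℓ where
  hyps := locHyps A U
  ne_zero := fun c hc => A.ne_zero c (Finset.mem_filter.mp hc).1
  nonparallel := fun c hc c' hc' =>
    A.nonparallel c (Finset.mem_filter.mp hc).1 c' (Finset.mem_filter.mp hc').1

/-- `H₀` (given by covector `c₀`) is a heavy hyperplane of `(A,m)`. -/
def IsHeavy (A : Arrangement K ℓ) (m : (Fin ℓ → K) → ℕ) (c₀ : Fin ℓ → K) : Prop :=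
  c₀ ∈ A.hyps ∧ (∑ c ∈ A.hyps.erase c₀, m c) ≤ m c₀

/-- `H₀` (given by covector `c₀`) is a locally heavy hyperplane of `(A,m)`. -/
def IsLocallyHeavy (A : Arrangement K ℓ) (m : (Fin ℓ → K) → ℕ) (c₀ : Fin ℓ → K) : Prop :=
  c₀ ∈ A.hyps ∧ ∀ U : Submodule K (Fin ℓ → K), IsFlatOfRank A U 2 → c₀ ∈ U →
    3 ≤ (locHyps A U).card → (∑ c ∈ (locHyps A U).erase c₀, m c) ≤ m c₀

/-- `b` is the second Betti number of the rank-2 localization of `(A,m)` at `U`: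
the product of the nonzero exponents of this free rank-2 multiarrangement. -/
def IsLocalB2 (A : Arrangement K ℓ) (m : (Fin ℓ → K) → ℕ)
    (U : Submodule K (Fin ℓ → K)) (b : ℕ) : Prop :=
  ∃ d : Fin ℓ → ℕ, IsFreeWithExp (localize A U) m d ∧
    b = ∏ i ∈ Finset.univ.filter (fun i => d i ≠ 0), d i

/-- `b` is the second Betti number `b₂(A,m)` of the multiarrangement `(A,m)`. -/
def IsB2 (A : Arrangement K ℓ) (m : (Fin ℓ → K) → ℕ) (b : ℕ) : Prop :=
  ∃ bloc : Submodule K (Fin ℓ → K) → ℕ,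
    (∀ U, IsFlatOfRank A U 2 → IsLocalB2 A m U (bloc U)) ∧
    b = ∑ᶠ U ∈ {U : Submodule K (Fin ℓ → K) | IsFlatOfRank A U 2}, bloc U

/-- The second Betti number of a simple arrangement:
`b₂(A) = Σ_{X ∈ L₂(A)} (|A_X| - 1)`. -/
noncomputable def b2Simple (A : Arrangement K ℓ) : ℕ :=
  ∑ᶠ U ∈ {U : Submodule K (Fin ℓ → K) | IsFlatOfRank A U 2}, ((locHyps A U).card - 1)

/-- The Euler–Ziegler multiplicity of the restricted hyperplane `H₀ ∩ ker(c)` of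
`A^{H₀}`: `m^{H₀}(X) = |m_X| - m(H₀)`. -/
noncomputable def EZmult (A : Arrangement K ℓ) (m : (Fin ℓ → K) → ℕ)
    (c₀ c : Fin ℓ → K) : ℕ :=
  (∑ c' ∈ A.hyps.filter (· ∈ Submodule.span K ({c₀, c} : Set (Fin ℓ → K))), m c') - m c₀

/-- Two covectors are parallel (define the same hyperplane). -/
def Parallel {n : ℕ} (b b' : Fin n → K) : Prop := ∃ t : K, t ≠ 0 ∧ b' = t • b

/-- The covector on `K^n` obtained by restricting the covector `c` on `K^{n+1}` to the
hyperplane `ker c₀`, transported by the linear isomorphism `e : ker c₀ ≃ K^n`. -/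
noncomputable def resCov {n : ℕ} (c₀ : Fin (n+1) → K)
    (e : ↥(LinearMap.ker (toFunc c₀)) ≃ₗ[K] (Fin n → K)) (c : Fin (n+1) → K) :
    Fin n → K :=
  fun j => toFunc c ((e.symm (Pi.single j 1) : ↥(LinearMap.ker (toFunc c₀))) : Fin (n+1) → K)

/-- `(B, mB)` is (a model, in coordinates, of) the Euler–Ziegler restriction
`(A^{H₀}, m^{H₀})` of `(A,m)` to the hyperplane `H₀ = ker c₀ ∈ A`. -/
def IsEZRes {n : ℕ} (A : Arrangement K (n+1)) (m : (Fin (n+1) → K) → ℕ)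
    (c₀ : Fin (n+1) → K) (B : Arrangement K n) (mB : (Fin n → K) → ℕ) : Prop :=
  c₀ ∈ A.hyps ∧
  ∃ e : ↥(LinearMap.ker (toFunc c₀)) ≃ₗ[K] (Fin n → K),
    (∀ c ∈ A.hyps.erase c₀, ∃ b ∈ B.hyps,
        Parallel b (resCov c₀ e c) ∧ mB b = EZmult A m c₀ c) ∧
    (∀ b ∈ B.hyps, ∃ c ∈ A.hyps.erase c₀, Parallel b (resCov c₀ e c))

/-- A combinatorial equivalence between two arrangements: a bijection between the
hyperplanes inducing an isomorphism of intersection lattices (it preserves the rank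
of every subset of hyperplanes). -/
def CombEquiv (A A' : Arrangement K ℓ) : Prop :=
  ∃ φ : (Fin ℓ → K) → (Fin ℓ → K), Set.BijOn φ ↑A.hyps ↑A'.hyps ∧
    ∀ T : Finset (Fin ℓ → K), T ⊆ A.hyps →
      Module.finrank K (Submodule.span K (T : Set (Fin ℓ → K))) =
      Module.finrank K (Submodule.span K ((T.image φ) : Set (Fin ℓ → K)))

/-!
Write `a = α₀ ^ m(H₀)` for the generic hyperplane `H₀ = {α₀ = 0}` and `P` for the product of the
remaining factors `α_H ^ m(H)`, and choose a constant vector field `∂_v` with `∂_v α₀ = 1`. The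
field `F = a P ∂_v` lies in `M = D(A, m)`. For each `H ≠ H₀`, replacing `v` by a vector tangent to
`H` shows `F ∈ (a, α_H ^ m(H)) M`. By genericity the forms `α_H`, `H ≠ H₀`, stay pairwise coprime
on `H₀`, so these ideals intersect in `(a, P)`; if `M` is free, reading coordinates gives
`F = a ξ + P ζ` with `ξ, ζ ∈ M`. As `a` and `P` are coprime, `ζ = a η`, and then
`P (∂_v - η) = ξ ∈ M`. Hence `α_H ∣ η(α_H)` for `H ≠ H₀` while `η(α₀) ≡ 1` modulo `α₀`: the
constant term of `η` is a vector lying on every hyperplane except `H₀`, which splits off `H₀` as a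
factor of `A`.
-/

section CommRing

variable {R M ι : Type*} [CommRing R] [AddCommGroup M] [Module R M]

theorem mem_ideal_smul_top_iff_repr_mem (b : Module.Basis ι R M) {I : Ideal R} {x : M} :
    x ∈ I • (⊤ : Submodule R M) ↔ ∀ i, b.repr x i ∈ I := by
  rw [← b.span_eq, Submodule.mem_ideal_smul_span_iff_exists_sum]
  constructor
  · rintro ⟨a, ha, rfl⟩ i
    have : (a.sum fun j r => r • b j) = Finsupp.linearCombination R b a := rfl
    rw [this, b.repr_linearCombination]
    exact ha i
  · exact fun h => ⟨b.repr x, h, b.linearCombination_repr x⟩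

theorem mem_span_pair_smul_top_iff {r s : R} {x : M} :
    x ∈ Ideal.span {r, s} • (⊤ : Submodule R M) ↔ ∃ y z : M, x = r • y + s • z := by
  simp only [Ideal.span_insert, Submodule.sup_smul, Submodule.ideal_span_singleton_smul,
    Submodule.mem_sup, Submodule.mem_smul_pointwise_iff_exists, Submodule.mem_top, true_and,
    exists_exists_eq_and]
  simp only [eq_comm]

theorem exists_smul_add_smul_eq_of_forall {N : Submodule R M} [Module.Free R N] {r P : R}
    {q : ι → R} (h : ∀ f, (∀ i, f ∈ Ideal.span {r, q i}) → f ∈ Ideal.span {r, P}) {x : M}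
    (hxN : x ∈ N) (hx : ∀ i, ∃ y ∈ N, ∃ z ∈ N, r • y + q i • z = x) :
    ∃ y ∈ N, ∃ z ∈ N, r • y + P • z = x := by
  let b := Module.Free.chooseBasis R N
  have hmem (i : ι) : (⟨x, hxN⟩ : N) ∈ Ideal.span {r, q i} • (⊤ : Submodule R N) := by
    obtain ⟨y, hy, z, hz, hxyz⟩ := hx i
    exact mem_span_pair_smul_top_iff.2 ⟨⟨y, hy⟩, ⟨z, hz⟩, Subtype.ext hxyz.symm⟩
  obtain ⟨y, z, hxyz⟩ := mem_span_pair_smul_top_iff.1 <|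
    (mem_ideal_smul_top_iff_repr_mem b).2 fun j =>
      h _ fun i => (mem_ideal_smul_top_iff_repr_mem b).1 (hmem i) j
  exact ⟨y, y.2, z, z.2, congrArg Subtype.val hxyz.symm⟩

theorem free_of_existsUnique_sum [Fintype ι] {N : Submodule R M} {e : ι → M} (he : ∀ i, e i ∈ N)
    (h : ∀ x ∈ N, ∃! f : ι → R, x = ∑ i, f i • e i) : Module.Free R N := by
  let b (i : ι) : N := ⟨e i, he i⟩
  have hb (f : ι → R) : ((∑ i, f i • b i : N) : M) = ∑ i, f i • e i := by
    simp only [Submodule.coe_sum, Submodule.coe_smul, b]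
  have hli : LinearIndependent R b := Fintype.linearIndependent_iff.2 fun f hf =>
    congrFun <| (h 0 N.zero_mem).unique (by rw [← hb, hf, Submodule.coe_zero])
      (by simp only [zero_smul, Finset.sum_const_zero])
  refine Module.Free.of_basis (Module.Basis.mk hli fun x _ => ?_)
  obtain ⟨f, hf, -⟩ := h x x.2
  exact (Submodule.mem_span_range_iff_exists_fun _).2 ⟨f, Subtype.ext ((hb f).trans hf.symm)⟩

theorem mem_span_pow_pair_of_forall_mem [IsDomain R] [DecompositionMonoid R] {t P : R} {q : ι → R}
    (ht : t ≠ 0) (htq : ∀ i, IsRelPrime t (q i)) (hqP : ∀ i, q i ∣ P)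
    (h : ∀ x, (∀ i, x ∈ Ideal.span {t, q i}) → x ∈ Ideal.span {t, P}) (k : ℕ) {x : R}
    (hx : ∀ i, x ∈ Ideal.span {t ^ k, q i}) : x ∈ Ideal.span {t ^ k, P} := by
  induction k with
  | zero => simp [Ideal.span_insert]
  | succ k ih =>
    simp only [Ideal.mem_span_pair] at ih h hx ⊢
    obtain ⟨w, p, hwp⟩ := ih fun i => by
      obtain ⟨r, u, hru⟩ := hx i
      exact ⟨r * t, u, by rw [← hru]; ring⟩
    obtain ⟨r, p', hw⟩ := h w fun i => by
      obtain ⟨r, u, hru⟩ := hx i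
      obtain ⟨Q, rfl⟩ := hqP i
      have hdiff : t ^ k * (w - t * r) = q i * (u - Q * p) := by linear_combination hwp - hru
      obtain ⟨y, hy⟩ := (htq i).pow_left.dvd_of_dvd_mul_left ⟨_, hdiff.symm⟩
      refine ⟨r, y, mul_left_cancel₀ (pow_ne_zero k ht) ?_⟩
      linear_combination -hdiff - q i * hy
    exact ⟨r, p + t ^ k * p', by linear_combination hwp + t ^ k * hw⟩

end CommRing

section LinearForms

theorem exists_dotProduct_eq_one_of_notMem {ι : Type*} [Fintype ι] {p : Submodule K (ι → K)}
    {c : ι → K} (hc : c ∉ p) : ∃ v : ι → K, c ⬝ᵥ v = 1 ∧ ∀ d ∈ p, d ⬝ᵥ v = 0 := by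
  obtain ⟨f, hfc, hfp⟩ := p.exists_le_ker_of_notMem hc
  have hdot (d : ι → K) : d ⬝ᵥ (dotProductEquiv K ι).symm f = f d := by
    rw [dotProduct_comm, ← dotProductEquiv_apply_apply, LinearEquiv.apply_symm_apply]
  refine ⟨(f c)⁻¹ • (dotProductEquiv K ι).symm f, ?_, fun d hd => ?_⟩
  · rw [dotProduct_smul, hdot, smul_eq_mul, inv_mul_cancel₀ hfc]
  · rw [dotProduct_smul, hdot, hfp hd, smul_zero]

theorem exists_dotProduct_eq_one {ι : Type*} [Fintype ι] {c : ι → K} (hc : c ≠ 0) :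
    ∃ v : ι → K, c ⬝ᵥ v = 1 := by
  obtain ⟨v, hv, -⟩ := exists_dotProduct_eq_one_of_notMem (p := ⊥) (by simpa using hc)
  exact ⟨v, hv⟩

theorem linForm_eq_linearCombination (c : Fin ℓ → K) :
    linForm c = Fintype.linearCombination K (X : Fin ℓ → S K ℓ) c := by
  simp only [linForm, Fintype.linearCombination_apply, smul_eq_C_mul]

theorem linForm_sub_smul (t : K) (c d : Fin ℓ → K) :
    linForm (d - t • c) = linForm d - C t * linForm c := by
  simp only [linForm_eq_linearCombination, map_sub, map_smul, smul_eq_C_mul]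

theorem linForm_eq_zero_iff {c : Fin ℓ → K} : linForm c = 0 ↔ c = 0 := by
  rw [linForm_eq_linearCombination]
  exact map_eq_zero_iff _ (linearIndependent_X (Fin ℓ) K).fintypeLinearCombination_injective

theorem constantCoeff_linForm (c : Fin ℓ → K) : constantCoeff (linForm c) = 0 := by
  simp [linForm]

theorem constantCoeff_eq_zero_of_linForm_pow_dvd {c : Fin ℓ → K} {k : ℕ} (hk : 0 < k) {f : S K ℓ}
    (h : linForm c ^ k ∣ f) : constantCoeff f = 0 := by
  obtain ⟨g, rfl⟩ := h
  rw [map_mul, map_pow, constantCoeff_linForm, zero_pow hk.ne', zero_mul]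

/-- Restriction of polynomials to the hyperplane `c = 0`, for `c ⬝ᵥ v = 1`. It is realised inside
`S` as the pullback along the projection `x ↦ x - (c ⬝ᵥ x) • v` onto that hyperplane. -/
noncomputable def restrictAlong (c v : Fin ℓ → K) : S K ℓ →ₐ[K] S K ℓ :=
  aeval fun i => X i - C (v i) * linForm c

variable {c d v : Fin ℓ → K}

theorem restrictAlong_linForm :
    restrictAlong c v (linForm d) = linForm (d - (d ⬝ᵥ v) • c) := by
  have hC (a : K) : restrictAlong c v (C a) = C a := (restrictAlong c v).commutes a
  have hX (i : Fin ℓ) : restrictAlong c v (X i) = X i - C (v i) * linForm c := aeval_X _ i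
  rw [linForm_sub_smul, linForm, map_sum]
  simp only [map_mul, hC, hX, mul_sub, Finset.sum_sub_distrib, ← mul_assoc, ← Finset.sum_mul,
    dotProduct, map_sum]

theorem linForm_dvd_sub_restrictAlong (f : S K ℓ) : linForm c ∣ f - restrictAlong c v f := by
  rw [← Ideal.mem_span_singleton, ← Ideal.Quotient.mk_eq_mk_iff_sub_mem]
  suffices Ideal.Quotient.mkₐ K (Ideal.span {linForm c}) =
      (Ideal.Quotient.mkₐ K _).comp (restrictAlong c v) from DFunLike.congr_fun this f
  refine algHom_ext fun i => ?_
  rw [AlgHom.comp_apply, restrictAlong, aeval_X]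
  simp only [Ideal.Quotient.mkₐ_eq_mk, Ideal.Quotient.mk_eq_mk_iff_sub_mem, sub_sub_cancel]
  exact Ideal.mul_mem_left _ _ (Ideal.mem_span_singleton_self _)

theorem restrictAlong_self (hcv : c ⬝ᵥ v = 1) : restrictAlong c v (linForm c) = 0 := by
  rw [restrictAlong_linForm, hcv, one_smul, sub_self, linForm_eq_zero_iff]

theorem mem_span_linForm_pair_iff (hcv : c ⬝ᵥ v = 1) {q f : S K ℓ} :
    f ∈ Ideal.span {linForm c, q} ↔ restrictAlong c v q ∣ restrictAlong c v f := by
  rw [Ideal.mem_span_pair]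
  constructor
  · rintro ⟨a, b, rfl⟩
    simp [restrictAlong_self hcv]
  · rintro ⟨u, hu⟩
    obtain ⟨g, hg⟩ := linForm_dvd_sub_restrictAlong (c := c) (v := v) f
    obtain ⟨h, hh⟩ := linForm_dvd_sub_restrictAlong (c := c) (v := v) q
    exact ⟨g - h * u, u, by linear_combination -hg + u * hh - hu⟩

theorem linForm_dvd_iff (hcv : c ⬝ᵥ v = 1) {f : S K ℓ} :
    linForm c ∣ f ↔ restrictAlong c v f = 0 := by
  simpa [Ideal.span_insert, Ideal.mem_span_singleton] using
    mem_span_linForm_pair_iff hcv (q := 0) (f := f)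

theorem prime_linForm (hc : c ≠ 0) : Prime (linForm c) := by
  obtain ⟨v, hcv⟩ := exists_dotProduct_eq_one hc
  have hker : Ideal.span {linForm c} = RingHom.ker (restrictAlong c v) := by
    ext f
    rw [Ideal.mem_span_singleton, linForm_dvd_iff hcv, RingHom.mem_ker]
  rw [← Ideal.span_singleton_prime (linForm_eq_zero_iff.not.2 hc), hker]
  exact RingHom.ker_isPrime _

theorem mem_span_singleton_of_linForm_dvd (hc : c ≠ 0) (h : linForm c ∣ linForm d) :
    d ∈ Submodule.span K {c} := by
  obtain ⟨v, hcv⟩ := exists_dotProduct_eq_one hc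
  rw [linForm_dvd_iff hcv, restrictAlong_linForm, linForm_eq_zero_iff, sub_eq_zero] at h
  exact Submodule.mem_span_singleton.2 ⟨_, h.symm⟩

theorem isRelPrime_linForm_pow (hc : c ≠ 0) (h : d ∉ Submodule.span K {c}) (i j : ℕ) :
    IsRelPrime (linForm c ^ i) (linForm d ^ j) :=
  ((prime_linForm hc).irreducible.isRelPrime_iff_not_dvd.2
    (mt (mem_span_singleton_of_linForm_dvd hc) h)).pow

theorem mem_span_linForm_prod_of_forall_mem (hc : c ≠ 0) {s : Finset (Fin ℓ → K)}
    (hs : (s : Set (Fin ℓ → K)).Pairwise fun d e => e ∉ Submodule.span K {c, d})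
    (m : (Fin ℓ → K) → ℕ) {f : S K ℓ} (hf : ∀ d ∈ s, f ∈ Ideal.span {linForm c, linForm d ^ m d}) :
    f ∈ Ideal.span {linForm c, ∏ d ∈ s, linForm d ^ m d} := by
  obtain ⟨v, hcv⟩ := exists_dotProduct_eq_one hc
  simp only [mem_span_linForm_pair_iff hcv, map_prod, map_pow, restrictAlong_linForm] at hf ⊢
  refine Finset.prod_dvd_of_isRelPrime (fun d hd e he hde => ?_) hf
  refine isRelPrime_linForm_pow (fun hzero => hs he hd hde.symm ?_)
    (fun hmem => hs hd he hde ?_) _ _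
  · rw [sub_eq_zero.1 hzero]
    exact Submodule.smul_mem _ _ (Submodule.mem_span_of_mem (by simp))
  · obtain ⟨t, ht⟩ := Submodule.mem_span_singleton.1 hmem
    exact Submodule.mem_span_pair.2
      ⟨e ⬝ᵥ v - t * (d ⬝ᵥ v), t, by linear_combination (norm := module) ht⟩

end LinearForms

section Derivations

theorem derivation_linForm (θ : Der K ℓ) (c : Fin ℓ → K) :
    θ (linForm c) = ∑ i, C (c i) * θ (X i) := by
  have hC (i : Fin ℓ) : θ (C (c i)) = 0 := θ.map_algebraMap (c i)
  simp only [linForm, map_sum, Derivation.leibniz, hC, smul_eq_mul, mul_zero, add_zero]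

theorem constantCoeff_derivation_linForm (θ : Der K ℓ) (c : Fin ℓ → K) :
    constantCoeff (θ (linForm c)) = c ⬝ᵥ fun i => constantCoeff (θ (X i)) := by
  simp only [derivation_linForm, map_sum, map_mul, constantCoeff_C, dotProduct]

theorem exists_eq_smul_of_forall_dvd {σ R : Type*} [CommRing R] {a : MvPolynomial σ R}
    {θ : Derivation R (MvPolynomial σ R) (MvPolynomial σ R)} (h : ∀ i, a ∣ θ (X i)) :
    ∃ η : Derivation R (MvPolynomial σ R) (MvPolynomial σ R), θ = a • η := by
  choose w hw using h
  refine ⟨mkDerivation R w, derivation_ext fun i => ?_⟩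
  rw [hw, Derivation.smul_apply, mkDerivation_X, smul_eq_mul]

/-- The constant vector field with coefficients `v`, i.e. the directional derivative along `v`. -/
noncomputable def constDer (v : Fin ℓ → K) : Der K ℓ := mkDerivation K fun i => C (v i)

theorem constDer_linForm (v c : Fin ℓ → K) : constDer v (linForm c) = C (c ⬝ᵥ v) := by
  simp only [derivation_linForm, constDer, mkDerivation_X, dotProduct, map_sum, map_mul]

theorem constDer_sub (v w : Fin ℓ → K) : constDer (v - w) = constDer v - constDer w :=
  derivation_ext fun i => by simp [constDer, mkDerivation_X]

/-- The module `D(A, m)` of logarithmic derivations of the multiarrangement `(A, m)`. -/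
def logDer (A : Arrangement K ℓ) (m : (Fin ℓ → K) → ℕ) : Submodule (S K ℓ) (Der K ℓ) where
  carrier := {θ | IsLogDer A m θ}
  zero_mem' := fun _ _ => dvd_zero _
  add_mem' := fun hθ hη c hc => dvd_add (hθ c hc) (hη c hc)
  smul_mem' := fun f _ hθ c hc => (hθ c hc).mul_left f

variable {A : Arrangement K ℓ} {m : (Fin ℓ → K) → ℕ}

theorem IsFree.free_logDer (h : IsFree A m) : Module.Free (S K ℓ) (logDer A m) :=
  let ⟨_, _, _, hmem, huniq⟩ := h
  free_of_existsUnique_sum (N := logDer A m) hmem huniq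

theorem smul_constDer_mem_logDer {f : S K ℓ} {v : Fin ℓ → K}
    (h : ∀ c ∈ A.hyps, c ⬝ᵥ v = 0 ∨ linForm c ^ m c ∣ f) : f • constDer v ∈ logDer A m := by
  intro c hc
  rw [Derivation.smul_apply, constDer_linForm, smul_eq_mul]
  rcases h c hc with hcv | hdvd
  · simp only [hcv, map_zero, mul_zero, dvd_zero]
  · exact hdvd.mul_right _

end Derivations

section Arrangements

variable {A : Arrangement K ℓ} {c₀ c d : Fin ℓ → K} {m : (Fin ℓ → K) → ℕ}

theorem Arrangement.notMem_span_singleton (A : Arrangement K ℓ) (hc : c ∈ A.hyps)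
    (hd : d ∈ A.hyps) (hcd : c ≠ d) : d ∉ Submodule.span K {c} := fun hmem =>
  let ⟨t, ht⟩ := Submodule.mem_span_singleton.1 hmem
  A.nonparallel c hc d hd hcd t ht.symm

theorem Arrangement.isRelPrime_linForm_pow (A : Arrangement K ℓ) (hc : c ∈ A.hyps)
    (hd : d ∈ A.hyps) (hcd : c ≠ d) (i j : ℕ) : IsRelPrime (linForm c ^ i) (linForm d ^ j) :=
  ArrPaper.isRelPrime_linForm_pow (A.ne_zero c hc) (A.notMem_span_singleton hc hd hcd) i j

theorem isFlatOfRank_span_pair (hc : c ∈ A.hyps) (hd : d ∈ A.hyps) (hcd : c ≠ d) :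
    IsFlatOfRank A (Submodule.span K {c, d}) 2 := by
  have hli : LinearIndependent K ![c, d] := (LinearIndependent.pair_iff' (A.ne_zero c hc)).2
    fun t ht => A.nonparallel c hc d hd hcd t ht.symm
  refine ⟨?_, le_antisymm (Submodule.span_le.2 fun e he => (Finset.mem_filter.1 he).2)
    (Submodule.span_mono ?_)⟩
  · have := finrank_span_eq_card hli
    rwa [Matrix.range_cons_cons_empty, Fintype.card_fin] at this
  · rintro e (rfl | rfl)
    · exact Finset.mem_filter.2 ⟨hc, Submodule.mem_span_of_mem (by simp)⟩
    · exact Finset.mem_filter.2 ⟨hd, Submodule.mem_span_of_mem (by simp)⟩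

/-- The hyperplane `c₀ = 0` of `A` is generic: every rank-2 flat contained in it lies on exactly two
hyperplanes of `A`. -/
def IsGeneric (A : Arrangement K ℓ) (c₀ : Fin ℓ → K) : Prop :=
  c₀ ∈ A.hyps ∧ ∀ U : Submodule K (Fin ℓ → K), IsFlatOfRank A U 2 → c₀ ∈ U →
    (locHyps A U).card = 2

theorem IsGeneric.locHyps_span_pair (h : IsGeneric A c₀) (hc : c ∈ A.hyps.erase c₀) :
    locHyps A (Submodule.span K {c₀, c}) = {c₀, c} := by
  obtain ⟨hne, hcA⟩ := Finset.mem_erase.1 hc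
  have hcard := h.2 _ (isFlatOfRank_span_pair h.1 hcA hne.symm)
    (Submodule.mem_span_of_mem (by simp))
  refine (Finset.eq_of_subset_of_card_le ?_ ?_).symm
  · intro e he
    rcases Finset.mem_insert.1 he with rfl | he
    · exact Finset.mem_filter.2 ⟨h.1, Submodule.mem_span_of_mem (by simp)⟩
    · rw [Finset.mem_singleton.1 he]
      exact Finset.mem_filter.2 ⟨hcA, Submodule.mem_span_of_mem (by simp)⟩
  · rw [hcard, Finset.card_pair hne.symm]

theorem IsGeneric.pairwise_notMem_span_pair (h : IsGeneric A c₀) :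
    (A.hyps.erase c₀ : Set (Fin ℓ → K)).Pairwise fun c d => d ∉ Submodule.span K {c₀, c} := by
  intro c hc d hd hcd hmem
  obtain ⟨hd₀, hdA⟩ := Finset.mem_erase.1 hd
  have hdloc : d ∈ locHyps A (Submodule.span K {c₀, c}) := Finset.mem_filter.2 ⟨hdA, hmem⟩
  rw [h.locHyps_span_pair hc, Finset.mem_insert, Finset.mem_singleton] at hdloc
  exact hdloc.elim hd₀ hcd.symm

/-- The defining polynomial of the deletion of `c₀` from the multiarrangement `(A, m)`. -/
noncomputable def deletionPoly (A : Arrangement K ℓ) (m : (Fin ℓ → K) → ℕ) (c₀ : Fin ℓ → K) :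
    S K ℓ :=
  ∏ c ∈ A.hyps.erase c₀, linForm c ^ m c

theorem linForm_pow_dvd_deletionPoly (hc : c ∈ A.hyps.erase c₀) :
    linForm c ^ m c ∣ deletionPoly A m c₀ :=
  Finset.dvd_prod_of_mem (fun c => linForm c ^ m c) hc

theorem isRelPrime_linForm_pow_deletionPoly (hc₀ : c₀ ∈ A.hyps) (k : ℕ) :
    IsRelPrime (linForm c₀ ^ k) (deletionPoly A m c₀) :=
  IsRelPrime.prod_right fun _ hc => A.isRelPrime_linForm_pow hc₀ (Finset.mem_of_mem_erase hc)
    (Finset.ne_of_mem_erase hc).symm _ _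

theorem deletionPoly_smul_constDer_mem_logDer {v : Fin ℓ → K} (hv : c₀ ⬝ᵥ v = 0) :
    deletionPoly A m c₀ • constDer v ∈ logDer A m :=
  smul_constDer_mem_logDer fun c hc => by
    rcases eq_or_ne c c₀ with rfl | hne
    · exact .inl hv
    · exact .inr (linForm_pow_dvd_deletionPoly (Finset.mem_erase.2 ⟨hne, hc⟩))

theorem exists_deletionPoly_eq_mul (hc : c ∈ A.hyps.erase c₀) {v : Fin ℓ → K} (hcv : c ⬝ᵥ v = 0) :
    ∃ Q, deletionPoly A m c₀ = linForm c ^ m c * Q ∧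
      (linForm c₀ ^ m c₀ * Q) • constDer v ∈ logDer A m := by
  refine ⟨_, (Finset.mul_prod_erase _ (fun d => linForm d ^ m d) hc).symm,
    smul_constDer_mem_logDer fun d hd => ?_⟩
  rcases eq_or_ne d c₀ with rfl | hd₀
  · exact .inr (dvd_mul_right _ _)
  rcases eq_or_ne d c with rfl | hdc
  · exact .inl hcv
  · exact .inr ((Finset.dvd_prod_of_mem (fun d => linForm d ^ m d)
      (Finset.mem_erase.2 ⟨hdc, Finset.mem_erase.2 ⟨hd₀, hd⟩⟩)).mul_left _)

-- The vector `v` may be replaced by one tangent to the hyperplane `c = 0`: the difference is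
-- tangent to `c₀ = 0`, so it contributes a multiple of `linForm c₀ ^ m c₀` in `D(A, m)`.
theorem exists_linForm_pow_smul_add_linForm_pow_smul_eq (hc₀ : c₀ ∈ A.hyps)
    (hc : c ∈ A.hyps.erase c₀) {v : Fin ℓ → K} (hv : c₀ ⬝ᵥ v = 1) :
    ∃ ξ ∈ logDer A m, ∃ ζ ∈ logDer A m, linForm c₀ ^ m c₀ • ξ + linForm c ^ m c • ζ =
      (linForm c₀ ^ m c₀ * deletionPoly A m c₀) • constDer v := by
  obtain ⟨hne, hcA⟩ := Finset.mem_erase.1 hc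
  obtain ⟨w, hw₀, hw⟩ :=
    exists_dotProduct_eq_one_of_notMem (A.notMem_span_singleton hcA hc₀ hne)
  have hvw : c₀ ⬝ᵥ (v - w) = 0 := by rw [dotProduct_sub, hv, hw₀, sub_self]
  obtain ⟨Q, hQ, hQmem⟩ :=
    exists_deletionPoly_eq_mul (m := m) hc (hw c (Submodule.mem_span_singleton_self c))
  refine ⟨_, deletionPoly_smul_constDer_mem_logDer hvw, _, hQmem, ?_⟩
  rw [constDer_sub, hQ]
  module

theorem IsGeneric.mem_span_pow_pair_of_forall_mem (h : IsGeneric A c₀) {f : S K ℓ} {k : ℕ}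
    (hf : ∀ c ∈ A.hyps.erase c₀, f ∈ Ideal.span {linForm c₀ ^ k, linForm c ^ m c}) :
    f ∈ Ideal.span {linForm c₀ ^ k, deletionPoly A m c₀} := by
  have hc₀ := A.ne_zero c₀ h.1
  refine ArrPaper.mem_span_pow_pair_of_forall_mem
    (q := fun c : A.hyps.erase c₀ => linForm c.1 ^ m c.1) (prime_linForm hc₀).ne_zero ?_
    (fun c => linForm_pow_dvd_deletionPoly c.2) ?_ k fun c => hf c.1 c.2
  · rintro ⟨c, hc⟩
    obtain ⟨hne, hcA⟩ := Finset.mem_erase.1 hc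
    simpa only [pow_one] using A.isRelPrime_linForm_pow h.1 hcA hne.symm 1 (m c)
  · exact fun g hg => mem_span_linForm_prod_of_forall_mem hc₀ h.pairwise_notMem_span_pair m
      fun c hc => hg ⟨c, hc⟩

theorem IsGeneric.exists_smul_add_smul_eq [Module.Free (S K ℓ) (logDer A m)] (h : IsGeneric A c₀)
    {v : Fin ℓ → K} (hv : c₀ ⬝ᵥ v = 1) :
    ∃ ξ ∈ logDer A m, ∃ ζ ∈ logDer A m,
      linForm c₀ ^ m c₀ • ξ + deletionPoly A m c₀ • ζ =
        (linForm c₀ ^ m c₀ * deletionPoly A m c₀) • constDer v := by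
  have hmem : (linForm c₀ ^ m c₀ * deletionPoly A m c₀) • constDer v ∈ logDer A m :=
    smul_constDer_mem_logDer fun c hc => .inr <| by
      rcases eq_or_ne c c₀ with rfl | hne
      · exact dvd_mul_right _ _
      · exact (linForm_pow_dvd_deletionPoly (Finset.mem_erase.2 ⟨hne, hc⟩)).mul_left _
  exact exists_smul_add_smul_eq_of_forall (N := logDer A m)
    (q := fun c : A.hyps.erase c₀ => linForm c.1 ^ m c.1)
    (fun f hf => h.mem_span_pow_pair_of_forall_mem fun c hc => hf ⟨c, hc⟩) hmem
    fun c => exists_linForm_pow_smul_add_linForm_pow_smul_eq h.1 c.2 hv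

theorem IsGeneric.exists_splitting_derivation [Module.Free (S K ℓ) (logDer A m)]
    (h : IsGeneric A c₀) : ∃ η : Der K ℓ, linForm c₀ ^ m c₀ ∣ 1 - η (linForm c₀) ∧
      ∀ c ∈ A.hyps.erase c₀, linForm c ^ m c ∣ η (linForm c) := by
  obtain ⟨v, hv⟩ := exists_dotProduct_eq_one (A.ne_zero c₀ h.1)
  obtain ⟨ξ, hξ, ζ, hζ, hF⟩ := h.exists_smul_add_smul_eq (m := m) hv
  have hcoprime := isRelPrime_linForm_pow_deletionPoly (m := m) h.1 (m c₀)
  have happly (f : S K ℓ) : linForm c₀ ^ m c₀ * deletionPoly A m c₀ * constDer v f =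
      linForm c₀ ^ m c₀ * ξ f + deletionPoly A m c₀ * ζ f := DFunLike.congr_fun hF.symm f
  obtain ⟨η, rfl⟩ : ∃ η : Der K ℓ, ζ = linForm c₀ ^ m c₀ • η :=
    exists_eq_smul_of_forall_dvd fun i => hcoprime.dvd_of_dvd_mul_left
      ⟨deletionPoly A m c₀ * constDer v (X i) - ξ (X i), by linear_combination -happly (X i)⟩
  refine ⟨η, hcoprime.dvd_of_dvd_mul_left ?_, fun c hc => ?_⟩
  · have ha : linForm c₀ ^ m c₀ ≠ 0 := pow_ne_zero _ (prime_linForm (A.ne_zero c₀ h.1)).ne_zero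
    have hξ₀ : deletionPoly A m c₀ * (1 - η (linForm c₀)) = ξ (linForm c₀) := by
      refine mul_left_cancel₀ ha ?_
      have := happly (linForm c₀)
      rw [constDer_linForm, hv, map_one, Derivation.smul_apply, smul_eq_mul] at this
      linear_combination this
    exact hξ₀ ▸ hξ c₀ h.1
  · obtain ⟨hne, hcA⟩ := Finset.mem_erase.1 hc
    exact (A.isRelPrime_linForm_pow hcA h.1 hne _ _).dvd_of_dvd_mul_left (hζ c hcA)

theorem reducible_of_dotProduct (hℓ : 2 ≤ ℓ) {w : Fin ℓ → K} (hw₀ : c₀ ⬝ᵥ w = 1)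
    (hw : ∀ c ∈ A.hyps.erase c₀, c ⬝ᵥ w = 0) : Reducible A := by
  let φ : Module.Dual K (Fin ℓ → K) := dotProductEquiv K (Fin ℓ) w
  have hφ (c : Fin ℓ → K) : φ c = c ⬝ᵥ w := dotProduct_comm w c
  have hc₀ : c₀ ≠ 0 := by
    rintro rfl
    simp at hw₀
  have hspan : Submodule.span K {c₀} ≠ ⊥ := by simpa using hc₀
  have hdisj : Disjoint (LinearMap.ker φ) (Submodule.span K {c₀}) := by
    rw [Submodule.disjoint_span_singleton' hc₀, LinearMap.mem_ker, hφ, hw₀]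
    exact one_ne_zero
  have hcompl := Module.Dual.isCompl_ker_of_disjoint_of_ne_bot
    (f := φ) (fun h => by simpa [hφ, hw₀] using DFunLike.congr_fun h c₀) hdisj hspan
  refine ⟨LinearMap.ker φ, Submodule.span K {c₀}, fun hker => ?_, hspan, hdisj.eq_bot,
    hcompl.sup_eq_top, fun c hc => ?_⟩
  · have htop := hcompl.sup_eq_top
    rw [hker, bot_sup_eq] at htop
    have := finrank_span_singleton (K := K) hc₀
    rw [htop, finrank_top, Module.finrank_fin_fun] at this
    omega
  · rcases eq_or_ne c c₀ with rfl | hne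
    · exact .inr (Submodule.mem_span_singleton_self c)
    · exact .inl ((hφ c).trans (hw c (Finset.mem_erase.2 ⟨hne, hc⟩)))

theorem rank_le (A : Arrangement K ℓ) : rank A ≤ ℓ :=
  (Submodule.finrank_le _).trans_eq (Module.finrank_fin_fun K)

end Arrangements

theorem stmt12_general (A : Arrangement K ℓ) (hA : ¬ Reducible A) (hℓ : 2 ≤ ℓ) (c₀ : Fin ℓ → K)
    (h : IsGeneric A c₀) (m : (Fin ℓ → K) → ℕ) (hm : ∀ c ∈ A.hyps, 0 < m c) :
    ¬ Module.Free (S K ℓ) (logDer A m) := by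
  intro hfree
  obtain ⟨η, hη₀, hη⟩ := h.exists_splitting_derivation (m := m)
  let w : Fin ℓ → K := fun i => constantCoeff (η (X i))
  have hw₀ : c₀ ⬝ᵥ w = 1 := by
    have := constantCoeff_eq_zero_of_linForm_pow_dvd (hm c₀ h.1) hη₀
    rwa [map_sub, map_one, constantCoeff_derivation_linForm, sub_eq_zero, eq_comm] at this
  have hw : ∀ c ∈ A.hyps.erase c₀, c ⬝ᵥ w = 0 := fun c hc => by
    rw [← constantCoeff_derivation_linForm]
    exact constantCoeff_eq_zero_of_linForm_pow_dvd (hm c (Finset.mem_of_mem_erase hc)) (hη c hc)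
  exact hA (reducible_of_dotProduct hℓ hw₀ hw)

theorem stmt12 (A : Arrangement K ℓ) (hA : ¬ Reducible A) (hr : 3 ≤ rank A)
    (c₀ : Fin ℓ → K) (hc₀ : c₀ ∈ A.hyps)
    (hgen : ∀ U : Submodule K (Fin ℓ → K), IsFlatOfRank A U 2 → c₀ ∈ U →
      (locHyps A U).card = 2) :
    ∀ m : (Fin ℓ → K) → ℕ, (∀ c ∈ A.hyps, 0 < m c) → ¬ IsFree A m := by
  intro m hm hfree
  have hℓ : 2 ≤ ℓ := by linarith [rank_le A]
  exact stmt12_general A hA hℓ c₀ ⟨hc₀, hgen⟩ m hm hfree.free_logDer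

end ArrPaper
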